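/- Let d ≥ 2 and let A be a matrix with the Frolov lattice properties (1°) and (2°). There exist constants c(d,A) > 0 and C(d,A) > 0 such that for any V ≥ V_0 := c(d,A) a^{-d}, the optimized 2-smooth fixed volume discrepancy of the Frolov point set satisfies D^{2,o}(F(a,A), V) ≤ C(d,A) a^{-2d} (log(2V/V_0))^{d-1}, where log denotes the logarithm to base 2. -/

import Mathlib

/-!
All weights are taken equal to the covolume `κ = |det (a⁻¹ A⁻ᵀ)|` of the lattice `a⁻¹ A⁻ᵀ ℤ^d`.
The box `B` lies in the unit cube, so the weighted sum over the Frolov points is `κ` times the sum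
of `h_B` over the whole lattice. By Poisson summation (`poisson_summation`), this equals the sum of
the Fourier transform of `h_B` over the dual lattice `a A ℤ^d`. The term at `0` is `∫ h_B`, so the
error is the sum over the nonzero dual points (`hatBox_lattice_error`).

The Fourier transform of `h_B` is a product of one-dimensional transforms, each of which is
`O(min (u, 1 / (u ω²)))`. Hence, up to a constant, the error is at most `a^{-2d}` times the sum over
`m ≠ 0` of `∏ j, min (U j ^ 2) (1 / (A m)_j ^ 2)`, where `U = a u` (`norm_hatBoxFourier_le`).

This sum is estimated by splitting into dyadic shells `U j |(A m)_j| ~ 2 ^ s_j`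
(`lattice_sum_bound`). Put `P = ∏ j, U j` and `|s| = ∑ j, s_j`. By property (1°) a shell can contain
a lattice point only if `P ≤ 2 ^ |s|`; by property (2°) such a shell contains `O(2 ^ |s| / P)`
points. Each of them contributes `O(P² 4 ^ (-|s|))`, and at most `(k + 1) ^ (d - 1)` tuples `s`
have `|s| = k`. The total is therefore `O(∑_{2 ^ k ≥ P} (k + 1) ^ (d - 1) P 2 ^ (-k))`, a sum
dominated by its first terms and hence `O((log₂ (2 P)) ^ (d - 1))`. With `c = 2 ^ d`, the number
`P` is exactly `V / V₀`.
-/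

open Matrix MeasureTheory

/-- The univariate hat function: `h_u(t) = 1 - |t|/u` for `|t| ≤ u`, `0` otherwise. -/
noncomputable def hatFn (u t : ℝ) : ℝ := if |t| ≤ u then 1 - |t| / u else 0

/-- The smooth hat function `h_B` of the box `B = ∏_j [x⁰_j - u_j, x⁰_j + u_j)`:
`h_B(x) = (∏_j u_j) · ∏_j h_{u_j}(x_j - x⁰_j)`. -/
noncomputable def hatBox {d : ℕ} (x0 u : Fin d → ℝ) (x : Fin d → ℝ) : ℝ :=
  (∏ j, u j) * ∏ j, hatFn (u j) (x j - x0 j)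

/-! ### Poisson summation on the integer lattice -/

/-- The integer translates of the half-open unit cube tile `ℝ^d`, so an integral over `ℝ^d` unfolds
into integrals of translates over one cube. The cube is written with `Ioc 0 (0 + 1)` to match
`UnitAddTorus.mFourierCoeff_eq_integral`. -/
lemma hasSum_cube_translates {d : ℕ} {E : Type*} [NormedAddCommGroup E] [NormedSpace ℝ E]
    (h : (Fin d → ℝ) → E) (hh : Integrable h) :
    HasSum (fun m : Fin d → ℤ =>
      ∫ x in {x : Fin d → ℝ | ∀ i, x i ∈ Set.Ioc (0 : ℝ) (0 + 1)}, h (x + fun i => (m i : ℝ)))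
      (∫ x, h x) := by
  set Q : Set (Fin d → ℝ) := {x | ∀ i, x i ∈ Set.Ioc (0 : ℝ) (0 + 1)} with hQ
  have hQm : MeasurableSet Q := MeasurableSet.univ_pi' (fun i => measurableSet_Ioc)
  let v : (Fin d → ℤ) → (Fin d → ℝ) := fun m i => (m i : ℝ)
  let s : (Fin d → ℤ) → Set (Fin d → ℝ) := fun m => (fun x => x - v m) ⁻¹' Q
  have hsm : ∀ m, MeasurableSet (s m) := fun m => (measurable_id.sub_const _) hQm
  have hmem : ∀ m x, x ∈ s m ↔ ∀ i, m i = ⌈x i⌉ - 1 := by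
    intro m x
    simp only [s, hQ, Set.mem_preimage, Set.mem_ofPred_eq, v, Pi.sub_apply, Set.mem_Ioc]
    refine forall_congr' fun i => ?_
    rw [eq_sub_iff_add_eq, eq_comm, Int.ceil_eq_iff]
    push_cast
    constructor <;> rintro ⟨h1, h2⟩ <;> constructor <;> linarith
  have hdisj : Pairwise (Function.onFun Disjoint s) := by
    intro m n hmn
    refine Set.disjoint_left.2 fun x hx hy => hmn ?_
    funext i
    rw [(hmem m x).1 hx i, (hmem n x).1 hy i]
  have hU : (⋃ m, s m) = Set.univ := by
    refine Set.eq_univ_of_forall fun x => Set.mem_iUnion.2 ⟨fun i => ⌈x i⌉ - 1, ?_⟩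
    exact (hmem _ x).2 fun i => rfl
  have key := hasSum_integral_iUnion (μ := volume) hsm hdisj (f := h) hh.integrableOn
  rw [hU, setIntegral_univ] at key
  convert key using 2 with m
  have hp := (measurePreserving_add_right volume (v m)).setIntegral_preimage_emb
    (MeasurableEquiv.addRight (v m)).measurableEmbedding h (s m)
  rw [← hp]
  congr 2
  ext x
  simp [s]

lemma locallyFinite_translates {d : ℕ} (g : (Fin d → ℝ) → ℂ) (hc : HasCompactSupport g) :
    LocallyFinite (fun m : Fin d → ℤ =>
      Function.support (fun x : Fin d → ℝ => g (x + fun i => (m i : ℝ)))) := by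
  obtain ⟨R, hR⟩ := hc.isCompact.isBounded.exists_norm_le
  intro x
  refine ⟨Metric.ball x 1, Metric.ball_mem_nhds x one_pos, ?_⟩
  refine (Set.finite_Icc (fun _ => -⌈R + ‖x‖ + 1⌉ : Fin d → ℤ) (fun _ => ⌈R + ‖x‖ + 1⌉)).subset ?_
  rintro m ⟨y, hy, hyx⟩
  have h1 := hR _ (subset_tsupport g hy)
  have h2 : ‖y - x‖ < 1 := by simpa [dist_eq_norm] using hyx
  have h3 : ‖(fun i => (m i : ℝ) : Fin d → ℝ)‖ ≤ R + ‖x‖ + 1 := by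
    have e : (fun i => (m i : ℝ) : Fin d → ℝ) = (y + fun i => (m i : ℝ)) - (y - x) - x := by
      abel
    rw [e]
    refine (norm_sub_le _ _).trans ?_
    have := norm_sub_le (y + fun i => (m i : ℝ)) (y - x)
    linarith
  have h4 : ∀ i, |m i| ≤ ⌈R + ‖x‖ + 1⌉ := by
    intro i
    have h5 := (norm_le_pi_norm (fun i => (m i : ℝ) : Fin d → ℝ) i).trans (h3.trans (Int.le_ceil _))
    rw [Real.norm_eq_abs] at h5
    exact_mod_cast h5
  exact ⟨fun i => (abs_le.1 (h4 i)).1, fun i => (abs_le.1 (h4 i)).2⟩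

/-- Poisson summation on `ℤ^d` for a continuous compactly supported function with summable Fourier
transform on `ℤ^d`: the periodization of `g` descends to a continuous function on the torus whose
Fourier coefficients are the values of the Fourier transform of `g`, and its Fourier series is
evaluated at `0`. -/
theorem poisson_summation {d : ℕ} (g : (Fin d → ℝ) → ℂ) (hg : Continuous g)
    (hc : HasCompactSupport g)
    (hs : Summable fun n : Fin d → ℤ =>
      ∫ x : Fin d → ℝ, UnitAddTorus.mFourier (-n) (fun i => (x i : UnitAddCircle)) * g x) :
    HasSum (fun n : Fin d → ℤ =>
      ∫ x : Fin d → ℝ, UnitAddTorus.mFourier (-n) (fun i => (x i : UnitAddCircle)) * g x)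
      (∑' m : Fin d → ℤ, g (fun i => (m i : ℝ))) := by
  have hlf := locallyFinite_translates g hc
  -- the periodization of `g`
  let F : (Fin d → ℝ) → ℂ := fun x => ∑' m : Fin d → ℤ, g (x + fun i => (m i : ℝ))
  have hFfin : F = fun x => ∑ᶠ m : Fin d → ℤ, g (x + fun i => (m i : ℝ)) := by
    funext x
    refine tsum_eq_finsum ?_
    exact hlf.point_finite x
  have hFc : Continuous F := by
    rw [hFfin]
    exact continuous_finsum (fun m => hg.comp (continuous_id.add_const _)) hlf
  have hFper : ∀ (x : Fin d → ℝ) (k : Fin d → ℤ), F (x + fun i => (k i : ℝ)) = F x := by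
    intro x k
    simp only [F]
    rw [← (Equiv.addLeft k).tsum_eq (fun m : Fin d → ℤ => g (x + fun i => (m i : ℝ)))]
    refine tsum_congr fun m => ?_
    congr 1
    funext i
    simp [add_assoc]
  let p : (Fin d → ℝ) → UnitAddTorus (Fin d) := fun x i => (x i : UnitAddCircle)
  have hp : IsOpenQuotientMap p := by
    refine ⟨?_, ?_, ?_⟩
    · intro t
      choose x hx using fun i => QuotientAddGroup.mk_surjective (t i)
      exact ⟨x, funext hx⟩
    · exact continuous_pi fun i => (AddCircle.continuous_mk' 1).comp (continuous_apply i)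
    · exact IsOpenMap.piMap (fun i => QuotientAddGroup.isOpenMap_coe) (by
        exact Filter.Eventually.of_forall fun i => QuotientAddGroup.mk_surjective)
  let σ : UnitAddTorus (Fin d) → (Fin d → ℝ) := Function.surjInv hp.surjective
  have hσ : ∀ t, p (σ t) = t := Function.surjInv_eq hp.surjective
  have hFσ : ∀ x, F (σ (p x)) = F x := by
    intro x
    have h1 := hσ (p x)
    have h2 : ∀ i, ∃ k : ℤ, σ (p x) i = x i + k := by
      intro i
      have h3 : ((σ (p x) i : ℝ) : UnitAddCircle) = (x i : ℝ) := congrFun h1 i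
      rw [← sub_eq_zero, ← AddCircle.coe_sub, AddCircle.coe_eq_zero_iff] at h3
      obtain ⟨k, hk⟩ := h3
      exact ⟨k, by rw [zsmul_eq_mul, mul_one] at hk; linarith⟩
    choose k hk using h2
    rw [← hFper x k]
    congr 1
    exact funext hk
  let Φ : C(UnitAddTorus (Fin d), ℂ) := ⟨fun t => F (σ t), by
    rw [← hp.continuous_comp_iff]
    convert hFc using 1
    exact funext hFσ⟩
  have hcoef : UnitAddTorus.mFourierCoeff Φ = fun n : Fin d → ℤ =>
      ∫ x : Fin d → ℝ, UnitAddTorus.mFourier (-n) (fun i => (x i : UnitAddCircle)) * g x := by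
    funext n
    rw [UnitAddTorus.mFourierCoeff_eq_integral Φ n 0]
    have hgi : Integrable g := hg.integrable_of_hasCompactSupport hc
    have hec : Continuous fun x : Fin d → ℝ => UnitAddTorus.mFourier (-n) (p x) :=
      (UnitAddTorus.mFourier (-n)).continuous.comp hp.continuous
    have hei : Integrable fun x => UnitAddTorus.mFourier (-n) (p x) * g x :=
      (hec.mul hg).integrable_of_hasCompactSupport hc.mul_left
    have hper : ∀ (x : Fin d → ℝ) (k : Fin d → ℤ), p (x + fun i => (k i : ℝ)) = p x := by
      intro x k
      funext i
      simp [p]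
    have hsum1 := hasSum_cube_translates _ hei
    have hsum2 := (hasSum_cube_translates _ hei.norm).summable
    rw [← hsum1.tsum_eq]
    refine Eq.trans ?_ (integral_tsum_of_summable_integral_norm ?_ hsum2).symm
    · refine integral_congr_ae (Filter.Eventually.of_forall fun x => ?_)
      simp only [hper]
      rw [tsum_mul_left]
      change _ * F (σ (p x)) = _
      rw [hFσ]
    · intro m
      exact (hei.comp_add_right _).integrableOn
  have := UnitAddTorus.hasSum_mFourier_series_apply_of_summable (f := Φ) (by rwa [hcoef]) (p 0)
  rw [hcoef] at this
  convert this using 1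
  · funext n
    simp [UnitAddTorus.mFourier, p]
  · change _ = F (σ (p 0))
    rw [hFσ]
    simp [F]

/-! ### Dyadic estimate of the dual lattice sum -/

/-- At most `(k + 1) ^ e` tuples of length `e + 1` have sum `k`, since all entries but the first
determine the tuple. -/
lemma card_tuples_sum_eq (e k : ℕ) (S : Finset (Fin (e + 1) → ℕ)) (hS : ∀ s ∈ S, ∑ j, s j = k) :
    S.card ≤ (k + 1) ^ e := by
  have h : S.card ≤ (Finset.Iic (fun _ : Fin e => k)).card := by
    refine Finset.card_le_card_of_injOn (fun s j => s j.succ) ?_ ?_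
    · intro s hs
      have := hS s hs
      rw [Fin.sum_univ_succ] at this
      simp only [Finset.coe_Iic, Set.mem_Iic]
      intro j
      have := Finset.single_le_sum (f := fun j : Fin e => s j.succ) (fun _ _ => Nat.zero_le _)
        (Finset.mem_univ j)
      simp only at this ⊢
      omega
    · intro s hs t ht hst
      have h1 := hS s hs
      have h2 := hS t ht
      rw [Fin.sum_univ_succ] at h1 h2
      have h3 : ∀ j : Fin e, s j.succ = t j.succ := fun j => congrFun hst j
      simp only [h3] at h1
      funext j
      refine Fin.cases ?_ h3 j
      omega
  simpa [Pi.card_Iic] using h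

/-- A sum of `(k + 1) ^ e * P * 2 ^ (-k)` over indices with `2 ^ k ≥ P` is, up to a constant
depending only on `e`, at most `(n + 1) ^ e` with `n = ⌊log₂ P⌋`. -/
lemma sum_dyadic_tail (e n : ℕ) (P : ℝ) (h2 : P < 2 ^ (n + 1))
    (hn : (2 : ℝ) ^ n ≤ P) (K : Finset ℕ) (hK : ∀ k ∈ K, P ≤ 2 ^ k) :
    ∑ k ∈ K, ((k + 1 : ℕ) : ℝ) ^ e * (P * (1 / 2) ^ k) ≤
      (n + 1 : ℝ) ^ e * ∑' i : ℕ, ((i + 1 : ℕ) : ℝ) ^ e * (2 * (1 / 2) ^ i) := by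
  have hs : Summable fun i : ℕ => ((i + 1 : ℕ) : ℝ) ^ e * (2 * (1 / 2) ^ i) := by
    have h := (summable_nat_add_iff 1).2
      (summable_pow_mul_geometric_of_norm_lt_one (R := ℝ) e (r := 1 / 2) (by norm_num))
    -- shifting the index contributes a factor `2` on top of the `2` in the summand
    refine (h.mul_left 4).congr fun i => ?_
    rw [pow_succ (1 / 2 : ℝ)]
    ring
  have hle : ∀ k ∈ K, n ≤ k := by
    intro k hk
    exact (pow_le_pow_iff_right₀ (by norm_num : (1 : ℝ) < 2)).1 (hn.trans (hK k hk))
  calc ∑ k ∈ K, ((k + 1 : ℕ) : ℝ) ^ e * (P * (1 / 2) ^ k)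
      ≤ ∑ k ∈ K, (n + 1 : ℝ) ^ e * (((k - n + 1 : ℕ) : ℝ) ^ e * (2 * (1 / 2) ^ (k - n))) := by
        refine Finset.sum_le_sum fun k hk => ?_
        obtain ⟨i, rfl⟩ := Nat.exists_eq_add_of_le (hle k hk)
        rw [Nat.add_sub_cancel_left, ← mul_assoc ((n + 1 : ℝ) ^ e), ← mul_pow]
        have e1 : P * (1 / 2 : ℝ) ^ (n + i) ≤ 2 * (1 / 2) ^ i := by
          have : P * (1 / 2 : ℝ) ^ n ≤ 2 := by
            rw [one_div, inv_pow, ← div_eq_mul_inv, div_le_iff₀ (by positivity)]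
            rw [pow_succ] at h2
            linarith
          rw [pow_add, ← mul_assoc]
          gcongr
        -- the polynomial weight at `k = n + i` splits into factors in `n` and in `i`
        have e2 : ((n + i + 1 : ℕ) : ℝ) ≤ (n + 1 : ℝ) * ((i + 1 : ℕ) : ℝ) := by
          push_cast
          nlinarith [mul_nonneg (Nat.cast_nonneg (α := ℝ) n) (Nat.cast_nonneg (α := ℝ) i)]
        have : 0 ≤ P := le_trans (by positivity) hn
        gcongr
    _ = (n + 1 : ℝ) ^ e * ∑ i ∈ K.image (fun k => k - n),
          ((i + 1 : ℕ) : ℝ) ^ e * (2 * (1 / 2) ^ i) := by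
        rw [Finset.sum_image, Finset.mul_sum]
        intro a ha b hb hab
        have := hle a ha
        have := hle b hb
        simp only at hab
        omega
    _ ≤ _ := by
        gcongr
        exact hs.sum_le_tsum _ fun i _ => by positivity

/-- The least `s : ℕ` with `r ≤ 2 ^ s`; the shell `s = 0` collects all `r ≤ 1`. -/
lemma exists_dyadic_shell (r : ℝ) : ∃ s : ℕ, r ≤ 2 ^ s ∧ (s = 0 ∨ 2 ^ s < 2 * r) := by
  have h : ∃ s : ℕ, r ≤ 2 ^ s := by
    obtain ⟨s, hs⟩ := pow_unbounded_of_one_lt r (by norm_num : (1 : ℝ) < 2)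
    exact ⟨s, hs.le⟩
  classical
  refine ⟨Nat.find h, Nat.find_spec h, ?_⟩
  rcases Nat.eq_zero_or_pos (Nat.find h) with h0 | h0
  · exact Or.inl h0
  · right
    have := Nat.find_min h (m := Nat.find h - 1) (by omega)
    push Not at this
    calc (2 : ℝ) ^ Nat.find h = 2 * 2 ^ (Nat.find h - 1) := by
          rw [← pow_succ']; congr 1; omega
      _ < _ := by linarith

/-- The estimate of the dual lattice sum. It is stated for finite sets of nonzero lattice points,
which gives both summability and the bound for the full series. -/
theorem lattice_sum_bound (e : ℕ) (A : Matrix (Fin (e + 1)) (Fin (e + 1)) ℝ)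
    (h1 : ∀ m : Fin (e + 1) → ℤ, m ≠ 0 → 1 ≤ |∏ j, A.mulVec (fun i => (m i : ℝ)) j|)
    (h2 : ∀ x y : Fin (e + 1) → ℝ, (∀ j, x j ≤ y j) →
      {m : Fin (e + 1) → ℤ | ∀ j, A.mulVec (fun i => (m i : ℝ)) j ∈ Set.Icc (x j) (y j)}.Finite ∧
      ({m : Fin (e + 1) → ℤ |
          ∀ j, A.mulVec (fun i => (m i : ℝ)) j ∈ Set.Icc (x j) (y j)}.ncard : ℝ)
        ≤ ∏ j, (y j - x j) + 1) :
    ∃ C : ℝ, 0 < C ∧ ∀ U : Fin (e + 1) → ℝ, (∀ j, 0 < U j) → 1 ≤ ∏ j, U j →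
      ∀ T : Finset (Fin (e + 1) → ℤ), 0 ∉ T →
        ∑ m ∈ T, ∏ j, min (U j ^ 2) (1 / (A.mulVec (fun i => (m i : ℝ)) j) ^ 2) ≤
          C * Real.logb 2 (2 * ∏ j, U j) ^ e := by
  set S : ℝ := ∑' i : ℕ, ((i + 1 : ℕ) : ℝ) ^ e * (2 * (1 / 2) ^ i) with hS
  have hS0 : 0 ≤ S := tsum_nonneg fun i => by positivity
  set D : ℝ := 4 ^ (e + 1) * (2 ^ (e + 1) + 1) with hD
  refine ⟨D * (S + 1), by positivity, ?_⟩
  intro U hU hP T hT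
  set P : ℝ := ∏ j, U j with hPdef
  have hP0 : 0 < P := by linarith
  set y : (Fin (e + 1) → ℤ) → Fin (e + 1) → ℝ := fun m => A.mulVec (fun i => (m i : ℝ)) with hy
  choose s hs1 hs2 using fun (m : Fin (e + 1) → ℤ) (j : Fin (e + 1)) =>
    exists_dyadic_shell (U j * |y m j|)
  -- by (1°), a nonzero lattice point lies in the shell `s` only if `P ≤ 2 ^ |s|`
  have hPle : ∀ m ∈ T, P ≤ 2 ^ ∑ j, s m j := by
    intro m hm
    have hm0 : m ≠ 0 := fun h => hT (h ▸ hm)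
    calc P ≤ P * |∏ j, y m j| := le_mul_of_one_le_right hP0.le (h1 m hm0)
      _ = ∏ j, (U j * |y m j|) := by rw [Finset.abs_prod, Finset.prod_mul_distrib]
      _ ≤ ∏ j, (2 : ℝ) ^ s m j :=
        Finset.prod_le_prod (fun j _ => mul_nonneg (hU j).le (abs_nonneg _)) fun j _ => hs1 m j
      _ = _ := Finset.prod_pow_eq_pow_sum _ _ _
  have hterm : ∀ m ∈ T, ∏ j, min (U j ^ 2) (1 / (y m j) ^ 2) ≤
      4 ^ (e + 1) * P ^ 2 * (1 / 4) ^ ∑ j, s m j := by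
    intro m hm
    calc ∏ j, min (U j ^ 2) (1 / (y m j) ^ 2)
        ≤ ∏ j, (4 * U j ^ 2 * (1 / 4) ^ s m j) := by
          refine Finset.prod_le_prod (fun j _ => by positivity) fun j _ => ?_
          rcases hs2 m j with h | h
          · rw [h, pow_zero]
            exact (min_le_left _ _).trans (by nlinarith [sq_nonneg (U j)])
          · refine (min_le_right _ _).trans ?_
            have hp : (0 : ℝ) < 2 ^ s m j := by positivity
            have hy0 : 0 < |y m j| := by
              by_contra hn
              have : |y m j| = 0 := le_antisymm (not_lt.1 hn) (abs_nonneg _)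
              rw [this] at h
              simp at h
              linarith
            have h4 : (4 : ℝ) ^ s m j = 2 ^ s m j * 2 ^ s m j := by
              rw [← mul_pow]; norm_num
            rw [_root_.one_div_pow, mul_one_div, ← sq_abs (y m j), div_le_div_iff₀ (by positivity)
              (by positivity), h4]
            nlinarith
      _ = _ := by
          rw [Finset.prod_mul_distrib, Finset.prod_mul_distrib, Finset.prod_pow_eq_pow_sum,
            Finset.prod_const, Finset.card_univ, Fintype.card_fin, Finset.prod_pow]
  -- by (2°); the summand `+ 1` is absorbed because `2 ^ |s| / P ≥ 1` for a nonempty shell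
  have hcount : ∀ t ∈ T.image s, (((T.filter fun m => s m = t).card : ℕ) : ℝ) ≤
      (2 ^ (e + 1) + 1) * (2 ^ (∑ j, t j) / P) := by
    intro t ht
    obtain ⟨m0, hm0, rfl⟩ := Finset.mem_image.1 ht
    set t := s m0
    have hbox := h2 (fun j => -(2 ^ t j / U j)) (fun j => 2 ^ t j / U j) (fun j => by
      have : 0 < 2 ^ t j / U j := div_pos (by positivity) (hU j)
      linarith)
    have hsub : ((T.filter fun m => s m = t : Finset _) : Set (Fin (e + 1) → ℤ)) ⊆
        {m : Fin (e + 1) → ℤ | ∀ j, A.mulVec (fun i => (m i : ℝ)) j ∈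
          Set.Icc (-(2 ^ t j / U j)) (2 ^ t j / U j)} := by
      intro m hm j
      rw [Finset.mem_coe, Finset.mem_filter] at hm
      have := hs1 m j
      rw [hm.2, mul_comm, ← le_div_iff₀ (hU j)] at this
      exact abs_le.1 this
    have hc := Set.ncard_le_ncard hsub hbox.1
    rw [Set.ncard_coe_finset] at hc
    have hprod : ∏ j, (2 ^ t j / U j - -(2 ^ t j / U j)) = 2 ^ (e + 1) * (2 ^ (∑ j, t j) / P) := by
      have : ∀ j, 2 ^ t j / U j - -(2 ^ t j / U j) = 2 * (2 ^ t j / U j) := fun j => by ring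
      simp only [this]
      rw [Finset.prod_mul_distrib, Finset.prod_div_distrib, Finset.prod_pow_eq_pow_sum,
        Finset.prod_const, Finset.card_univ, Fintype.card_fin]
    have h3 : (1 : ℝ) ≤ 2 ^ (∑ j, t j) / P := (one_le_div hP0).2 (hPle m0 hm0)
    calc (((T.filter fun m => s m = t).card : ℕ) : ℝ) ≤ _ := by exact_mod_cast hc
      _ ≤ _ := hbox.2
      _ ≤ _ := by rw [hprod]; linarith
  obtain ⟨n, hn1, hn2⟩ := exists_nat_pow_near hP (by norm_num : (1 : ℝ) < 2)
  have hlog : (n + 1 : ℝ) ≤ Real.logb 2 (2 * P) := by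
    rw [Real.le_logb_iff_rpow_le (by norm_num) (by positivity)]
    calc (2 : ℝ) ^ (n + 1 : ℝ) = 2 ^ (n + 1) := by exact_mod_cast Real.rpow_natCast 2 (n + 1)
      _ ≤ 2 * P := by rw [pow_succ]; linarith
  calc ∑ m ∈ T, ∏ j, min (U j ^ 2) (1 / (y m j) ^ 2)
      ≤ ∑ m ∈ T, 4 ^ (e + 1) * P ^ 2 * (1 / 4) ^ ∑ j, s m j := Finset.sum_le_sum hterm
    _ = ∑ t ∈ T.image s, ((T.filter fun m => s m = t).card : ℝ) *
          (4 ^ (e + 1) * P ^ 2 * (1 / 4) ^ ∑ j, t j) := by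
        rw [Finset.sum_comp (fun t : Fin (e + 1) → ℕ =>
          (4 : ℝ) ^ (e + 1) * P ^ 2 * (1 / 4) ^ ∑ j, t j) s]
        simp only [nsmul_eq_mul]
    _ ≤ ∑ t ∈ T.image s, D * (P * (1 / 2) ^ ∑ j, t j) := by
        refine Finset.sum_le_sum fun t ht => ?_
        refine (mul_le_mul_of_nonneg_right (hcount t ht) (by positivity)).trans (le_of_eq ?_)
        have h4 : (1 / 4 : ℝ) ^ (∑ j, t j) = (1 / 2) ^ (∑ j, t j) * (1 / 2) ^ (∑ j, t j) := by
          rw [← mul_pow]; norm_num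
        have h5 : (2 : ℝ) ^ (∑ j, t j) * (1 / 2) ^ (∑ j, t j) = 1 := by
          rw [← mul_pow]; norm_num
        rw [h4, hD]
        field_simp
        exact h5
    _ = D * ∑ k ∈ (T.image s).image (fun t => ∑ j, t j),
          (((T.image s).filter fun t => ∑ j, t j = k).card : ℝ) * (P * (1 / 2) ^ k) := by
        rw [← Finset.mul_sum, Finset.sum_comp (fun k : ℕ => P * (1 / 2 : ℝ) ^ k)
          (fun t : Fin (e + 1) → ℕ => ∑ j, t j)]
        simp only [nsmul_eq_mul]
    _ ≤ D * ∑ k ∈ (T.image s).image (fun t => ∑ j, t j),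
          ((k + 1 : ℕ) : ℝ) ^ e * (P * (1 / 2) ^ k) := by
        gcongr with k hk
        exact_mod_cast card_tuples_sum_eq e k _ fun t ht => (Finset.mem_filter.1 ht).2
    _ ≤ D * ((n + 1 : ℝ) ^ e * S) := by
        gcongr
        refine sum_dyadic_tail e n P hn2 hn1 _ ?_
        intro k hk
        obtain ⟨t, ht, rfl⟩ := Finset.mem_image.1 hk
        obtain ⟨m, hm, rfl⟩ := Finset.mem_image.1 ht
        exact hPle m hm
    _ ≤ D * (Real.logb 2 (2 * P) ^ e * (S + 1)) := by
        have : 0 ≤ Real.logb 2 (2 * P) := le_trans (by positivity) hlog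
        gcongr
        linarith
    _ = _ := by ring

/-! ### The Fourier transform of the hat function -/

lemma hatFn_eq_max {u : ℝ} (hu : 0 < u) (t : ℝ) : hatFn u t = max 0 (1 - |t| / u) := by
  unfold hatFn
  split_ifs with h
  · rw [max_eq_right]
    rw [sub_nonneg, div_le_one hu]
    exact h
  · rw [max_eq_left]
    rw [sub_nonpos, one_le_div hu]
    exact (not_le.1 h).le

lemma continuous_hatFn {u : ℝ} (hu : 0 < u) : Continuous (hatFn u) := by
  rw [funext (hatFn_eq_max hu)]
  fun_prop

lemma abs_hatFn_le_one {u : ℝ} (hu : 0 < u) (t : ℝ) : |hatFn u t| ≤ 1 := by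
  rw [hatFn_eq_max hu, abs_of_nonneg (le_max_left _ _)]
  refine max_le zero_le_one ?_
  have : 0 ≤ |t| / u := by positivity
  linarith

lemma hatFn_eq_zero {u : ℝ} (hu : 0 < u) {t : ℝ} (h : u ≤ |t|) : hatFn u t = 0 := by
  rw [hatFn_eq_max hu, max_eq_left]
  rw [sub_nonpos, one_le_div hu]
  exact h

/-- The Laplace-type integral of one half of the hat function. -/
lemma integral_ramp {u : ℝ} (hu : 0 < u) {l : ℂ} (hl : l ≠ 0) :
    ∫ t in (0 : ℝ)..u, Complex.exp (l * t) * (1 - t / u) =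
      Complex.exp (l * u) / (u * l ^ 2) - 1 / l - 1 / (u * l ^ 2) := by
  have hu' : (u : ℂ) ≠ 0 := by exact_mod_cast hu.ne'
  -- the antiderivative comes from one integration by parts
  have hd : ∀ t : ℝ, HasDerivAt
      (fun t : ℝ => ((1 - (t : ℂ) / u) / l + 1 / (u * l ^ 2)) * Complex.exp (l * t))
      (Complex.exp (l * t) * (1 - t / u)) t := by
    intro t
    have h0 : HasDerivAt (fun t : ℝ => (t : ℂ)) 1 t := Complex.ofRealCLM.hasDerivAt
    have h1 := ((((h0.div_const (u : ℂ)).const_sub 1).div_const l).add_const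
      (1 / (u * l ^ 2))).mul ((h0.const_mul l).cexp)
    refine h1.congr_deriv ?_
    field_simp
    ring
  rw [intervalIntegral.integral_eq_sub_of_hasDerivAt (fun t _ => hd t)
    (Continuous.intervalIntegrable (by fun_prop) _ _)]
  simp only [Complex.ofReal_zero, mul_zero, Complex.exp_zero]
  field_simp
  ring

lemma integral_exp_mul_hatFn {u : ℝ} (hu : 0 < u) (ω x0 : ℝ) :
    ∫ t : ℝ, Complex.exp (ω * t * Complex.I) * (hatFn u (t - x0) : ℂ) =
      Complex.exp (ω * x0 * Complex.I) *
        ∫ t in (-u)..u, Complex.exp (ω * t * Complex.I) * (hatFn u t : ℂ) := by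
  rw [← integral_add_right_eq_self _ x0, ← intervalIntegral.integral_const_mul,
    intervalIntegral.integral_eq_integral_of_support_subset]
  · refine integral_congr_ae (Filter.Eventually.of_forall fun t => ?_)
    simp only [add_sub_cancel_right]
    rw [← mul_assoc, ← Complex.exp_add]
    congr 2
    push_cast
    ring
  · intro t ht
    by_contra hn
    apply ht
    have : u ≤ |t| := by
      by_contra h
      rw [not_le, abs_lt] at h
      exact hn ⟨h.1, h.2.le⟩
    simp [hatFn_eq_zero hu this]

lemma norm_integral_hat_le {u : ℝ} (hu : 0 < u) (ω x0 : ℝ) :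
    ‖∫ t : ℝ, Complex.exp (ω * t * Complex.I) * (hatFn u (t - x0) : ℂ)‖ ≤ 2 * u := by
  rw [integral_exp_mul_hatFn hu, norm_mul]
  have h1 : ‖Complex.exp (ω * x0 * Complex.I)‖ = 1 := by
    rw [← Complex.ofReal_mul, Complex.norm_exp_ofReal_mul_I]
  rw [h1, one_mul]
  refine (intervalIntegral.norm_integral_le_of_norm_le_const (C := 1) fun t _ => ?_).trans ?_
  · rw [norm_mul, ← Complex.ofReal_mul, Complex.norm_exp_ofReal_mul_I, one_mul,
      Complex.norm_real, Real.norm_eq_abs]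
    exact abs_hatFn_le_one hu t
  · rw [one_mul, abs_of_nonneg (by linarith)]
    linarith

/-- The quadratic decay of the Fourier transform of the hat function: the `1 / ω` terms of its two
halves cancel because the hat function is continuous at `0`. -/
lemma norm_integral_hat_le' {u : ℝ} (hu : 0 < u) {ω : ℝ} (hω : ω ≠ 0) (x0 : ℝ) :
    ‖∫ t : ℝ, Complex.exp (ω * t * Complex.I) * (hatFn u (t - x0) : ℂ)‖ ≤ 4 / (u * ω ^ 2) := by
  rw [integral_exp_mul_hatFn hu, norm_mul]
  have hn : ∀ s : ℝ, ‖Complex.exp (ω * s * Complex.I)‖ = 1 := fun s => by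
    rw [← Complex.ofReal_mul, Complex.norm_exp_ofReal_mul_I]
  rw [hn, one_mul]
  have hc : Continuous fun t : ℝ => Complex.exp (ω * t * Complex.I) * (hatFn u t : ℂ) := by
    have := continuous_hatFn hu
    fun_prop
  have hl : (ω * Complex.I : ℂ) ≠ 0 := by simp [hω]
  have hu' : (u : ℂ) ≠ 0 := by exact_mod_cast hu.ne'
  have hω' : (ω : ℂ) ≠ 0 := by exact_mod_cast hω
  rw [← intervalIntegral.integral_add_adjacent_intervals (hc.intervalIntegrable _ 0)
    (hc.intervalIntegrable 0 _)]
  have hpos : ∫ t in (0 : ℝ)..u, Complex.exp (ω * t * Complex.I) * (hatFn u t : ℂ) =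
      ∫ t in (0 : ℝ)..u, Complex.exp (ω * Complex.I * t) * (1 - t / u) := by
    refine intervalIntegral.integral_congr fun t ht => ?_
    rw [Set.uIcc_of_le hu.le] at ht
    have : hatFn u t = 1 - t / u := by
      rw [hatFn, abs_of_nonneg ht.1, if_pos ht.2]
    simp only [this]
    push_cast
    congr 2
    ring
  have hneg : ∫ t in (-u)..0, Complex.exp (ω * t * Complex.I) * (hatFn u t : ℂ) =
      ∫ t in (0 : ℝ)..u, Complex.exp (-(ω * Complex.I) * t) * (1 - t / u) := by
    rw [← neg_zero, ← intervalIntegral.integral_comp_neg, neg_zero]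
    refine intervalIntegral.integral_congr fun t ht => ?_
    rw [Set.uIcc_of_le hu.le] at ht
    have : hatFn u (-t) = 1 - t / u := by
      rw [hatFn, abs_neg, abs_of_nonneg ht.1, if_pos ht.2]
    simp only [this]
    push_cast
    congr 2
    ring
  rw [hpos, hneg, integral_ramp hu hl, integral_ramp hu (neg_ne_zero.2 hl)]
  have e1 : Complex.exp (-(ω * Complex.I) * u) / (u * (-(ω * Complex.I)) ^ 2) -
      1 / (-(ω * Complex.I)) - 1 / (u * (-(ω * Complex.I)) ^ 2) +
      (Complex.exp (ω * Complex.I * u) / (u * (ω * Complex.I) ^ 2) - 1 / (ω * Complex.I) -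
        1 / (u * (ω * Complex.I) ^ 2)) =
      (Complex.exp (ω * (-u : ℝ) * Complex.I) + Complex.exp (ω * (u : ℝ) * Complex.I) - 2) /
        (-((u * ω ^ 2 : ℝ) : ℂ)) := by
    have a1 : -(ω * Complex.I) * (u : ℂ) = ω * (-u : ℝ) * Complex.I := by push_cast; ring
    have a2 : (ω * Complex.I) * (u : ℂ) = ω * (u : ℝ) * Complex.I := by ring
    have a3 : (u : ℂ) * (-(ω * Complex.I)) ^ 2 = -((u * ω ^ 2 : ℝ) : ℂ) := by
      rw [neg_sq, mul_pow, Complex.I_sq]; push_cast; ring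
    have a4 : (u : ℂ) * (ω * Complex.I) ^ 2 = -((u * ω ^ 2 : ℝ) : ℂ) := by
      rw [mul_pow, Complex.I_sq]; push_cast; ring
    rw [a1, a2, a3, a4, one_div_neg_eq_neg_one_div]
    ring
  rw [e1, norm_div, norm_neg, Complex.norm_real, Real.norm_of_nonneg (by positivity)]
  gcongr
  refine (norm_sub_le _ _).trans ?_
  refine (add_le_add_left (norm_add_le _ _) _).trans ?_
  rw [hn, hn]
  norm_num

/-! ### Cubature error of a lattice for box hat functions -/

lemma continuous_hatBox {d : ℕ} (x0 u : Fin d → ℝ) (hu : ∀ j, 0 < u j) :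
    Continuous (hatBox x0 u) := by
  unfold hatBox
  refine continuous_const.mul (continuous_finsetProd _ fun j _ => ?_)
  exact (continuous_hatFn (hu j)).comp (by fun_prop)

lemma hatBox_eq_zero {d : ℕ} (x0 u : Fin d → ℝ) (hu : ∀ j, 0 < u j) {x : Fin d → ℝ} {j : Fin d}
    (h : u j ≤ |x j - x0 j|) : hatBox x0 u x = 0 := by
  exact mul_eq_zero_of_right _ (Finset.prod_eq_zero (Finset.mem_univ j) (hatFn_eq_zero (hu j) h))

lemma integral_comp_mulVec {d : ℕ} (M : Matrix (Fin d) (Fin d) ℝ) (hM : M.det ≠ 0)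
    (φ : (Fin d → ℝ) → ℂ) (hφ : Continuous φ) :
    ∫ x, φ (M.mulVec x) = (|M.det|⁻¹ : ℝ) * ∫ x, φ x := by
  have h := Real.map_matrix_volume_pi_eq_smul_volume_pi hM
  have h2 := integral_map (μ := volume) (φ := Matrix.toLin' M) (f := φ)
    (LinearMap.continuous_of_finiteDimensional _).aemeasurable hφ.aestronglyMeasurable
  rw [h, integral_smul_measure, ENNReal.toReal_ofReal (abs_nonneg _)] at h2
  simp only [Matrix.toLin'_apply] at h2
  rw [← h2, abs_inv]
  exact Complex.real_smul

/-- The character `n` of `ℤ^d`, pulled back along `Bᵀ`, is the exponential with frequency `B n`,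
which factors over the coordinates. -/
lemma mFourier_mulVec {d : ℕ} (n : Fin d → ℤ) (B : Matrix (Fin d) (Fin d) ℝ) (y : Fin d → ℝ) :
    UnitAddTorus.mFourier (-n) (fun i => ((Bᵀ.mulVec y i : ℝ) : UnitAddCircle)) =
      ∏ j, Complex.exp ((-(2 * Real.pi * B.mulVec (fun i => (n i : ℝ)) j) : ℝ) * y j *
        Complex.I) := by
  have h : ∑ i, (n i : ℝ) * (Bᵀ.mulVec y) i = ∑ j, B.mulVec (fun i => (n i : ℝ)) j * y j := by
    change (fun i => (n i : ℝ)) ⬝ᵥ (Bᵀ.mulVec y) = B.mulVec (fun i => (n i : ℝ)) ⬝ᵥ y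
    rw [Matrix.dotProduct_mulVec, Matrix.vecMul_transpose]
  simp only [UnitAddTorus.mFourier, ContinuousMap.coe_mk]
  simp only [fourier_coe_apply, ← Complex.exp_sum]
  congr 1
  have h' : ∑ i, (n i : ℂ) * ((Bᵀ.mulVec y i : ℝ) : ℂ) =
      ∑ j, ((B.mulVec (fun i => (n i : ℝ)) j : ℝ) : ℂ) * (y j : ℂ) := by exact_mod_cast h
  calc _ = -(2 * Real.pi * Complex.I) * ∑ i, (n i : ℂ) * ((Bᵀ.mulVec y i : ℝ) : ℂ) := by
        rw [Finset.mul_sum]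
        refine Finset.sum_congr rfl fun i _ => ?_
        simp only [Pi.neg_apply]
        push_cast
        ring
    _ = _ := by
        rw [h', Finset.mul_sum]
        refine Finset.sum_congr rfl fun i _ => ?_
        push_cast
        ring

/-- The Fourier transform of `hatBox x0 u` at the dual lattice point `B n`. The exponential is
written as the torus character `-n` evaluated at `Bᵀ y`, see `mFourier_mulVec`. -/
noncomputable def hatBoxFourier {d : ℕ} (x0 u : Fin d → ℝ) (B : Matrix (Fin d) (Fin d) ℝ)
    (n : Fin d → ℤ) : ℂ :=
  ∫ y : Fin d → ℝ, UnitAddTorus.mFourier (-n) (fun i => ((Bᵀ.mulVec y i : ℝ) : UnitAddCircle)) *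
    (hatBox x0 u y : ℂ)

lemma hatBoxFourier_zero {d : ℕ} (x0 u : Fin d → ℝ) (B : Matrix (Fin d) (Fin d) ℝ) :
    hatBoxFourier x0 u B 0 = ((∫ y, hatBox x0 u y : ℝ) : ℂ) := by
  simp only [hatBoxFourier, neg_zero, UnitAddTorus.mFourier_zero, ContinuousMap.one_apply, one_mul]
  exact integral_ofReal

/-- The decay of the Fourier transform of the box hat function on the dual lattice `a A ℤ^d`, with
the scaling in `a` extracted. -/
lemma norm_hatBoxFourier_le {d : ℕ} (x0 u : Fin d → ℝ) (hu : ∀ j, 0 < u j) {a : ℝ} (ha : 0 < a)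
    (A : Matrix (Fin d) (Fin d) ℝ) (n : Fin d → ℤ)
    (hn : ∀ j, A.mulVec (fun i => (n i : ℝ)) j ≠ 0) :
    ‖hatBoxFourier x0 u (a • A) n‖ ≤
      2 ^ d * (a ^ (2 * d))⁻¹ *
        ∏ j, min ((a * u j) ^ 2) (1 / (A.mulVec (fun i => (n i : ℝ)) j) ^ 2) := by
  set y := A.mulVec (fun i => (n i : ℝ)) with hy
  have h1 : hatBoxFourier x0 u (a • A) n = ∏ j, ((u j : ℂ) *
      ∫ t : ℝ, Complex.exp ((-(2 * Real.pi * (a * y j)) : ℝ) * t * Complex.I) *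
        (hatFn (u j) (t - x0 j) : ℂ)) := by
    rw [Finset.prod_mul_distrib, ← integral_fintype_prod_volume_eq_prod
      (f := fun j (t : ℝ) => Complex.exp ((-(2 * Real.pi * (a * y j)) : ℝ) * t * Complex.I) *
        (hatFn (u j) (t - x0 j) : ℂ)), ← integral_const_mul, hatBoxFourier]
    refine integral_congr_ae (Filter.Eventually.of_forall fun x => ?_)
    simp only [mFourier_mulVec, Matrix.smul_mulVec, Pi.smul_apply, smul_eq_mul, hatBox, ← hy]
    rw [Finset.prod_mul_distrib]
    push_cast
    ring
  rw [h1, norm_prod]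
  calc ∏ j, ‖(u j : ℂ) * _‖ ≤ ∏ j, (2 * (a ^ 2)⁻¹ * min ((a * u j) ^ 2) (1 / (y j) ^ 2)) := by
        refine Finset.prod_le_prod (fun j _ => norm_nonneg _) fun j _ => ?_
        have hω : -(2 * Real.pi * (a * y j)) ≠ 0 :=
          neg_ne_zero.2 (mul_ne_zero (by positivity) (mul_ne_zero ha.ne' (hn j)))
        have b1 := norm_integral_hat_le (hu j) (-(2 * Real.pi * (a * y j))) (x0 j)
        have b2 := norm_integral_hat_le' (hu j) hω (x0 j)
        rw [norm_mul, Complex.norm_real, Real.norm_of_nonneg (hu j).le,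
          mul_min_of_nonneg _ _ (by positivity)]
        have hyj : 0 < y j ^ 2 := by have := hn j; positivity
        have huj := hu j
        refine le_min ?_ ?_
        · refine (mul_le_mul_of_nonneg_left b1 (hu j).le).trans (le_of_eq ?_)
          field_simp
        · refine (mul_le_mul_of_nonneg_left b2 (hu j).le).trans ?_
          have e1 : u j * (4 / (u j * (-(2 * Real.pi * (a * y j))) ^ 2)) =
              (Real.pi ^ 2)⁻¹ * ((a ^ 2)⁻¹ * (1 / y j ^ 2)) := by
            have := hn j
            field_simp
            norm_num
          rw [e1, mul_assoc]
          gcongr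
          have : (1 : ℝ) ≤ Real.pi ^ 2 := one_le_pow₀ (by linarith [Real.pi_gt_three])
          exact (inv_le_one_of_one_le₀ this).trans one_le_two
    _ = _ := by
        rw [Finset.prod_mul_distrib, Finset.prod_const, Finset.card_univ, Fintype.card_fin, mul_pow,
          inv_pow, ← pow_mul]

/-- The error of the equal-weight rule on the lattice `M ℤ^d` is the sum of the Fourier transform
over the nonzero points of the dual lattice `B ℤ^d`. The bound `K` is assumed for finite partial
sums, so that it also provides the summability required for Poisson summation. -/
theorem hatBox_lattice_error {d : ℕ} (x0 u : Fin d → ℝ) (hu : ∀ j, 0 < u j)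
    (M B : Matrix (Fin d) (Fin d) ℝ) (hM : M.det ≠ 0) (hBM : Bᵀ * M = 1) {K : ℝ}
    (hK : ∀ T : Finset (Fin d → ℤ), 0 ∉ T → ∑ n ∈ T, ‖hatBoxFourier x0 u B n‖ ≤ K) :
    |(∫ x, hatBox x0 u x) -
      ∑' m : Fin d → ℤ, |M.det| * hatBox x0 u (M.mulVec fun i => (m i : ℝ))| ≤ K := by
  have hcont := continuous_hatBox x0 u hu
  have hBMx : ∀ x, Bᵀ.mulVec (M.mulVec x) = x := fun x => by
    rw [Matrix.mulVec_mulVec, hBM, Matrix.one_mulVec]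
  let g : (Fin d → ℝ) → ℂ := fun x => (hatBox x0 u (M.mulVec x) : ℂ)
  have hMc : Continuous fun x : Fin d → ℝ => M.mulVec x := continuous_const.matrix_mulVec continuous_id
  have hBc : Continuous fun x : Fin d → ℝ => Bᵀ.mulVec x :=
    continuous_const.matrix_mulVec continuous_id
  have hg : Continuous g := Complex.continuous_ofReal.comp (hcont.comp hMc)
  have hgs : HasCompactSupport g := by
    refine HasCompactSupport.intro
      ((isCompact_Icc (a := fun j => x0 j - u j) (b := fun j => x0 j + u j)).image hBc) ?_
    intro x hx
    have hx' : ¬ ∀ j, |M.mulVec x j - x0 j| ≤ u j := by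
      intro h
      refine hx ⟨M.mulVec x, ⟨fun j => ?_, fun j => ?_⟩, hBMx x⟩
      · have := (abs_le.1 (h j)).1
        simp only
        linarith
      · have := (abs_le.1 (h j)).2
        simp only
        linarith
    push Not at hx'
    obtain ⟨j, hj⟩ := hx'
    simp only [g]
    rw [hatBox_eq_zero x0 u hu hj.le, Complex.ofReal_zero]
  have hG : ∀ n : Fin d → ℤ,
      ∫ x : Fin d → ℝ, UnitAddTorus.mFourier (-n) (fun i => (x i : UnitAddCircle)) * g x =
        (|M.det|⁻¹ : ℝ) * hatBoxFourier x0 u B n := by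
    intro n
    have hpc : Continuous fun y : Fin d → ℝ =>
        (fun i => ((Bᵀ.mulVec y i : ℝ) : UnitAddCircle)) :=
      continuous_pi fun i => (AddCircle.continuous_mk' 1).comp ((continuous_apply i).comp hBc)
    rw [hatBoxFourier, ← integral_comp_mulVec M hM
      (fun y => UnitAddTorus.mFourier (-n) (fun i => ((Bᵀ.mulVec y i : ℝ) : UnitAddCircle)) *
        (hatBox x0 u y : ℂ))
      (((UnitAddTorus.mFourier (-n)).continuous.comp hpc).mul
        (Complex.continuous_ofReal.comp hcont))]
    simp only [hBMx, g]
  have hsum : Summable fun n => hatBoxFourier x0 u B n := by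
    refine Summable.of_norm (summable_of_sum_le (c := ‖hatBoxFourier x0 u B 0‖ + K)
      (fun n => norm_nonneg _) fun T => ?_)
    classical
    calc ∑ n ∈ T, ‖hatBoxFourier x0 u B n‖
        ≤ ∑ n ∈ insert 0 (T.erase 0), ‖hatBoxFourier x0 u B n‖ := by
          refine Finset.sum_le_sum_of_subset_of_nonneg ?_ fun _ _ _ => norm_nonneg _
          exact Finset.insert_erase_subset 0 T
      _ ≤ _ := by
          rw [Finset.sum_insert (Finset.notMem_erase _ _)]
          gcongr
          exact hK _ (Finset.notMem_erase _ _)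
  have hpois := poisson_summation g hg hgs (by simp only [hG]; exact hsum.mul_left _)
  simp only [hG] at hpois
  have hdet : (|M.det| : ℝ) ≠ 0 := abs_ne_zero.2 hM
  have h1 : HasSum (fun n => hatBoxFourier x0 u B n)
      (((∑' m : Fin d → ℤ, |M.det| * hatBox x0 u (M.mulVec fun i => (m i : ℝ)) : ℝ)) : ℂ) := by
    have hl : ∀ n, ((|M.det| : ℝ) : ℂ) * ((|M.det|⁻¹ : ℝ) * hatBoxFourier x0 u B n) =
        hatBoxFourier x0 u B n := fun n => by
      rw [← mul_assoc, ← Complex.ofReal_mul, mul_inv_cancel₀ hdet, Complex.ofReal_one, one_mul]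
    have hr := hpois.mul_left ((|M.det| : ℝ) : ℂ)
    simp only [hl] at hr
    rw [tsum_mul_left, Complex.ofReal_mul, Complex.ofReal_tsum]
    exact hr
  have h2 := h1.sub (hasSum_ite_eq (0 : Fin d → ℤ) (hatBoxFourier x0 u B 0))
  have h3 : ‖(((∑' m : Fin d → ℤ, |M.det| * hatBox x0 u (M.mulVec fun i => (m i : ℝ)) : ℝ)) : ℂ) -
      hatBoxFourier x0 u B 0‖ ≤ K := by
    refine le_of_tendsto' h2.norm fun T => ?_
    classical
    refine (norm_sum_le _ _).trans ((le_of_eq ?_).trans (hK (T.erase 0) (Finset.notMem_erase _ _)))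
    rw [← Finset.sum_subset (Finset.erase_subset 0 T)]
    · refine Finset.sum_congr rfl fun n hn => ?_
      rw [if_neg (Finset.ne_of_mem_erase hn), sub_zero]
    · intro n hn hn'
      have : n = 0 := by
        by_contra h
        exact hn' (Finset.mem_erase.2 ⟨h, hn⟩)
      subst this
      simp
  rw [hatBoxFourier_zero, ← Complex.ofReal_sub, Complex.norm_real, Real.norm_eq_abs] at h3
  rw [abs_sub_comm]
  exact h3

/-! ### The discrepancy of Frolov point sets -/

/-- Let `d ≥ 2` and `A` satisfy the Frolov lattice properties (1°) and (2°). There exist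
`c(d,A) > 0` and `C(d,A) > 0` such that for every `a > 1` and every `V ≥ V₀ := c(d,A) a^{-d}`,
the optimized `2`-smooth fixed volume discrepancy of the Frolov point set
`F(a,A) = {a⁻¹(A⁻¹)ᵀ m : m ∈ ℤ^d} ∩ [0,1]^d` satisfies
`D^{2,o}(F(a,A),V) ≤ C(d,A) a^{-2d} (log₂(2V/V₀))^{d-1}`: there are weights `w` on the points
of `F(a,A)` such that for every axis-parallel box `B ⊆ [0,1)^d` of volume `V` the weighted
discrepancy `|∫ h_B - Σ_z w(z) h_B(z)|` is at most the stated bound. -/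
theorem frolov_optimized_smooth_fixed_volume_discrepancy
    (d : ℕ) (hd : 2 ≤ d) (A : Matrix (Fin d) (Fin d) ℝ)
    (hA : IsUnit A.det)
    (h1 : ∀ m : Fin d → ℤ, m ≠ 0 → 1 ≤ |∏ j, A.mulVec (fun i => (m i : ℝ)) j|)
    (h2 : ∀ x y : Fin d → ℝ, (∀ j, x j ≤ y j) →
      {m : Fin d → ℤ | ∀ j, A.mulVec (fun i => (m i : ℝ)) j ∈ Set.Icc (x j) (y j)}.Finite ∧
      ({m : Fin d → ℤ | ∀ j, A.mulVec (fun i => (m i : ℝ)) j ∈ Set.Icc (x j) (y j)}.ncard : ℝ)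
        ≤ ∏ j, (y j - x j) + 1) :
    ∃ c C : ℝ, 0 < c ∧ 0 < C ∧ ∀ a : ℝ, 1 < a → ∀ V : ℝ, c / a ^ d ≤ V →
      ∃ w : (Fin d → ℝ) → ℝ,
      ∀ x0 u : Fin d → ℝ, (∀ j, 0 < u j) →
      (∀ j, 0 ≤ x0 j - u j) → (∀ j, x0 j + u j ≤ 1) →
      (∏ j, (2 * u j)) = V →
      |(∫ x : Fin d → ℝ, hatBox x0 u x) -
          (∑' m : Fin d → ℤ,
            if (∀ j, a⁻¹ * (A⁻¹)ᵀ.mulVec (fun i => (m i : ℝ)) j ∈ Set.Icc (0 : ℝ) 1) then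
              w (fun j => a⁻¹ * (A⁻¹)ᵀ.mulVec (fun i => (m i : ℝ)) j) *
                hatBox x0 u (fun j => a⁻¹ * (A⁻¹)ᵀ.mulVec (fun i => (m i : ℝ)) j)
            else 0)| ≤
        C * (a ^ (2 * d))⁻¹ * Real.logb 2 (2 * V / (c / a ^ d)) ^ (d - 1) := by
  obtain ⟨e, rfl⟩ : ∃ e, d = e + 1 := ⟨d - 1, by omega⟩
  obtain ⟨C, hC, hCb⟩ := lattice_sum_bound e A h1 h2
  refine ⟨2 ^ (e + 1), 2 ^ (e + 1) * C, by positivity, by positivity, ?_⟩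
  intro a ha V hV
  have ha0 : 0 < a := by linarith
  set M : Matrix (Fin (e + 1)) (Fin (e + 1)) ℝ := a⁻¹ • (A⁻¹)ᵀ with hMdef
  have hBM : (a • A)ᵀ * M = 1 := by
    rw [hMdef, Matrix.transpose_smul, Matrix.smul_mul, Matrix.mul_smul, smul_smul,
      mul_inv_cancel₀ ha0.ne', one_smul, ← Matrix.transpose_mul, Matrix.nonsing_inv_mul _ hA,
      Matrix.transpose_one]
  have hM : M.det ≠ 0 := by
    intro h
    have := congrArg Matrix.det hBM
    rw [Matrix.det_mul, h, mul_zero, Matrix.det_one] at this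
    exact zero_ne_one this
  refine ⟨fun _ => |M.det|, ?_⟩
  intro x0 u hu hl hr hvol
  have hMv : ∀ (m : Fin (e + 1) → ℤ) j,
      a⁻¹ * (A⁻¹)ᵀ.mulVec (fun i => (m i : ℝ)) j = M.mulVec (fun i => (m i : ℝ)) j := by
    intro m j
    rw [hMdef, Matrix.smul_mulVec, Pi.smul_apply, smul_eq_mul]
  -- the box lies in the unit cube, so lattice points outside the cube do not contribute
  have hsum : (∑' m : Fin (e + 1) → ℤ,
      if (∀ j, a⁻¹ * (A⁻¹)ᵀ.mulVec (fun i => (m i : ℝ)) j ∈ Set.Icc (0 : ℝ) 1) then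
        |M.det| * hatBox x0 u (fun j => a⁻¹ * (A⁻¹)ᵀ.mulVec (fun i => (m i : ℝ)) j)
      else 0) = ∑' m : Fin (e + 1) → ℤ, |M.det| * hatBox x0 u (M.mulVec fun i => (m i : ℝ)) := by
    refine tsum_congr fun m => ?_
    simp only [hMv]
    split_ifs with h
    · rfl
    · push Not at h
      obtain ⟨j, hj⟩ := h
      have : u j ≤ |M.mulVec (fun i => (m i : ℝ)) j - x0 j| := by
        by_contra hlt
        rw [not_le, abs_lt] at hlt
        have := hl j
        have := hr j
        exact hj ⟨by linarith [hlt.1], by linarith [hlt.2]⟩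
      rw [hatBox_eq_zero x0 u hu this, mul_zero]
  simp only [hsum]
  have hPV : ∏ j, (a * u j) = V / (2 ^ (e + 1) / a ^ (e + 1)) := by
    rw [← hvol, Finset.prod_mul_distrib, Finset.prod_mul_distrib, Finset.prod_const,
      Finset.prod_const, Finset.card_univ, Fintype.card_fin]
    field_simp
  have hP1 : 1 ≤ ∏ j, (a * u j) := by
    rw [hPV, one_le_div (by positivity)]
    exact hV
  refine hatBox_lattice_error x0 u hu M (a • A) hM hBM ?_
  intro T hT
  have hb := hCb (fun j => a * u j) (fun j => mul_pos ha0 (hu j)) hP1 T hT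
  calc ∑ n ∈ T, ‖hatBoxFourier x0 u (a • A) n‖
      ≤ ∑ n ∈ T, 2 ^ (e + 1) * (a ^ (2 * (e + 1)))⁻¹ *
          ∏ j, min ((a * u j) ^ 2) (1 / (A.mulVec (fun i => (n i : ℝ)) j) ^ 2) := by
        refine Finset.sum_le_sum fun n hn => norm_hatBoxFourier_le x0 u hu ha0 A n fun j hj => ?_
        have := h1 n (fun h => hT (h ▸ hn))
        rw [Finset.prod_eq_zero (Finset.mem_univ j) hj, abs_zero] at this
        linarith
    _ ≤ 2 ^ (e + 1) * (a ^ (2 * (e + 1)))⁻¹ *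
          (C * Real.logb 2 (2 * ∏ j, (a * u j)) ^ e) := by
        rw [← Finset.mul_sum]
        gcongr
    _ = _ := by
        rw [hPV, mul_div_assoc, Nat.add_sub_cancel]
        ring
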